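/- Let R > 0, a < b with ab > 0, and let g be a smooth matrix-valued function on Ω_{a,b,R} \ {x' = 0}. Suppose (v,q) is a C^∞ solution of −Δv + ∇q = div g, div v = 0 on Ω_{a,b,R} \ {x' = 0}, satisfying v ∈ L²(Ω_{a,b,R}), ∇v, g ∈ L¹(Ω_{a,b,R}), and ( ‖∇v‖_{L²(Ω_{a,b,R} \ Ω_{a,b,ε})} + ‖q‖_{L²(Ω_{a,b,R} \ Ω_{a,b,ε})} + ‖g‖_{L²(Ω_{a,b,R} \ Ω_{a,b,ε})} ) / √|ln ε| → 0 as ε → 0⁺. Then for every φ ∈ C_c^∞(Ω_{a,b,R}; ℝ³) with div φ = 0, one has ∫_{Ω_{a,b,R}} ( ∇v·∇φ + g·∇φ ) dx = 0, and div v = 0 holds in the distributional sense on all of Ω_{a,b,R}, i.e. ∫_{Ω_{a,b,R}} v·∇ψ dx = 0 for every ψ ∈ C_c^∞(Ω_{a,b,R}). -/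

import Mathlib

noncomputable section

open Real Filter MeasureTheory Metric Topology
open scoped ENNReal InnerProductSpace

abbrev V3 := EuclideanSpace ℝ (Fin 3)
abbrev V2 := EuclideanSpace ℝ (Fin 2)

/-- standard basis vector in `ℝ³` -/
def e3 (j : Fin 3) : V3 := EuclideanSpace.single j 1

/-- partial derivative `∂_j f` -/
def pd (j : Fin 3) (f : V3 → ℝ) (x : V3) : ℝ := fderiv ℝ f x (e3 j)

/-- Laplacian on `ℝ³` -/
def lap3 (f : V3 → ℝ) (x : V3) : ℝ := ∑ j, pd j (fun y => pd j f y) x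

/-- stationary Navier–Stokes equations `-Δu + (u·∇)u + ∇p = 0`, `div u = 0` at `x` -/
def NSEq (u : V3 → V3) (p : V3 → ℝ) (x : V3) : Prop :=
  (∀ i, - lap3 (fun z => u z i) x + (∑ j, u x j * pd j (fun z => u z i) x) + pd i p x = 0)
  ∧ (∑ j, pd j (fun z => u z j) x) = 0

/-- stationary Euler equations `(u·∇)u + ∇p = 0`, `div u = 0` at `x` -/
def EulerEq (u : V3 → V3) (p : V3 → ℝ) (x : V3) : Prop :=
  (∀ i, (∑ j, u x j * pd j (fun z => u z i) x) + pd i p x = 0)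
  ∧ (∑ j, pd j (fun z => u z j) x) = 0

/-- south pole -/
def S3 : V3 := EuclideanSpace.single 2 (-1)
/-- north pole -/
def N3 : V3 := EuclideanSpace.single 2 1

/-- the unit sphere `S²` -/
def sphere2 : Set V3 := Metric.sphere (0 : V3) 1

/-- the open cone over a subset of the unit sphere -/
def cone3 (Ω : Set V3) : Set V3 := {x : V3 | x ≠ 0 ∧ (‖x‖⁻¹ • x) ∈ Ω}

/-- `|x'| = √(x₁² + x₂²)` -/
def rho (x : V3) : ℝ := Real.sqrt ((x 0) ^ 2 + (x 1) ^ 2)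

/-- the `x₃`-axis `{x' = 0}` -/
def axis3 : Set V3 := {x : V3 | x 0 = 0 ∧ x 1 = 0}

/-- `Ω_{a,b,R} = {a < x₃ < b, |x'| < R}` -/
def OmegaR (a b R : ℝ) : Set V3 := {x : V3 | a < x 2 ∧ x 2 < b ∧ rho x < R}

/-- build a point of `ℝ³` from `x' ∈ ℝ²` and `x₃ ∈ ℝ` -/
def emb (y : V2) (t : ℝ) : V3 := (EuclideanSpace.equiv (Fin 3) ℝ).symm ![y 0, y 1, t]

/-- spherical component `u_r = u · e_r` -/
def uRc (u : V3 → V3) (x : V3) : ℝ := (u x 0 * x 0 + u x 1 * x 1 + u x 2 * x 2) / ‖x‖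

/-- spherical component `u_θ = u · e_θ` -/
def uTc (u : V3 → V3) (x : V3) : ℝ :=
  (u x 0 * x 0 * x 2 + u x 1 * x 1 * x 2) / (‖x‖ * rho x) - u x 2 * rho x / ‖x‖

/-- spherical component `u_φ = u · e_φ` -/
def uPc (u : V3 → V3) (x : V3) : ℝ := (-(u x 0) * x 1 + u x 1 * x 0) / rho x

/-- axisymmetry on a set: the spherical components are independent of the meridian angle -/
def AxisymOn (u : V3 → V3) (Ω : Set V3) : Prop :=
  ∀ x ∈ Ω, ∀ y ∈ Ω, ‖x‖ = ‖y‖ → x 2 = y 2 →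
    uRc u x = uRc u y ∧ uTc u x = uTc u y ∧ uPc u x = uPc u y

/-- spherical frame vector `e_r` -/
def eRv (x : V3) : V3 := ‖x‖⁻¹ • x

/-- spherical frame vector `e_θ` -/
def eThv (x : V3) : V3 := (EuclideanSpace.equiv (Fin 3) ℝ).symm
  ![x 2 * x 0 / (‖x‖ * rho x), x 2 * x 1 / (‖x‖ * rho x), -(rho x) / ‖x‖]

/-- spherical frame vector `e_φ` -/
def ePhv (x : V3) : V3 := (EuclideanSpace.equiv (Fin 3) ℝ).symm ![-(x 1) / rho x, x 0 / rho x, 0]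

/-- the spherical cap `S² ∩ B_δ(S) \ {S}` -/
def NSCap (δ : ℝ) : Set V3 := (sphere2 ∩ Metric.ball S3 δ) \ {S3}

/-- the spherical cap `S² ∩ B_δ(S)` -/
def NSCapFull (δ : ℝ) : Set V3 := sphere2 ∩ Metric.ball S3 δ

/-!
The axis has zero capacity in `ℝ³`: on a bounded set, the logarithmic cutoff `η_ε` vanishing for
`|x'| < ε` has Dirichlet energy `O(1 / |ln ε|)`, because `1 / (|x'|² + ε²)` has integral
`O(|ln ε|)` there. Let `F` be a matrix field that is divergence-free off the axis. Testing against
`η_ε φ`, whose support avoids the axis, gives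

  `∫ η_ε (F : ∇φ) = -∫ F : (φ ⊗ ∇η_ε)`,

and by Cauchy-Schwarz the right-hand side is at most a constant times `|ln ε|^{-1/2}` times the `L²`
norm of `F` off the `ε`-tube, which tends to zero. The momentum equation is the case
`F = ∇v + g - q I`; the pressure cancels against `div φ = 0` while the cutoff is still in place, so
it needs no integrability near the axis. The continuity equation is the case of the one-row field
`F = v`.
-/

section PartialDerivatives

lemma norm_e3 (j : Fin 3) : ‖e3 j‖ = 1 := by simp [e3]

lemma abs_pd_le_norm_fderiv (j : Fin 3) (f : V3 → ℝ) (x : V3) : |pd j f x| ≤ ‖fderiv ℝ f x‖ := by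
  simpa [pd, norm_e3] using (fderiv ℝ f x).le_opNorm (e3 j)

lemma pd_coord {v : V3 → V3} {x : V3} (hv : DifferentiableAt ℝ v x) (i j : Fin 3) :
    pd j (fun z => v z i) x = fderiv ℝ v x (e3 j) i := by
  have h : HasFDerivAt (fun z => v z i) _ x :=
    (EuclideanSpace.proj (𝕜 := ℝ) i : V3 →L[ℝ] ℝ).hasFDerivAt.comp x hv.hasFDerivAt
  rw [pd, h.fderiv]
  rfl

lemma abs_pd_coord_le {v : V3 → V3} {x : V3} (hv : DifferentiableAt ℝ v x) (i j : Fin 3) :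
    |pd j (fun z => v z i) x| ≤ ‖fderiv ℝ v x‖ := by
  rw [pd_coord hv]
  refine (PiLp.norm_apply_le (p := 2) (fderiv ℝ v x (e3 j)) i).trans ?_
  simpa [norm_e3] using (fderiv ℝ v x).le_opNorm (e3 j)

lemma pd_mul {f h : V3 → ℝ} {x : V3} (hf : DifferentiableAt ℝ f x) (hh : DifferentiableAt ℝ h x)
    (j : Fin 3) : pd j (fun z => f z * h z) x = f x * pd j h x + h x * pd j f x := by
  simp [pd, fderiv_fun_mul hf hh]

lemma tsupport_pd_subset (j : Fin 3) (f : V3 → ℝ) : tsupport (pd j f) ⊆ tsupport f :=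
  tsupport_fderiv_apply_subset ℝ (e3 j)

lemma continuousOn_pd {U : Set V3} (hU : IsOpen U) {f : V3 → ℝ} (hf : ContDiffOn ℝ 1 f U)
    (j : Fin 3) : ContinuousOn (pd j f) U :=
  (hf.continuousOn_fderiv_of_isOpen hU le_rfl).clm_apply continuousOn_const

lemma continuous_pd {f : V3 → ℝ} (hf : ContDiff ℝ 1 f) (j : Fin 3) : Continuous (pd j f) :=
  (hf.continuous_fderiv one_ne_zero).clm_apply continuous_const

lemma contDiffOn_pd {U : Set V3} (hU : IsOpen U) {m n : WithTop ℕ∞} (hmn : m + 1 ≤ n) {f : V3 → ℝ}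
    (hf : ContDiffOn ℝ n f U) (j : Fin 3) : ContDiffOn ℝ m (pd j f) U :=
  (hf.fderiv_of_isOpen hU hmn).clm_apply contDiffOn_const

end PartialDerivatives

section IntegrationByParts

lemma integrable_mul_of_tsupport_subset {X : Type*} [TopologicalSpace X] [MeasurableSpace X]
    [OpensMeasurableSpace X] {μ : Measure X} [IsFiniteMeasureOnCompacts μ] {U : Set X}
    (hU : IsOpen U) {f w : X → ℝ} (hf : ContinuousOn f U) (hw : Continuous w)
    (hwc : HasCompactSupport w) (hwU : tsupport w ⊆ U) : Integrable (fun x => f x * w x) μ := by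
  have hcont : Continuous fun x => f x * w x :=
    (hf.mul hw.continuousOn).continuous_of_tsupport_subset hU (tsupport_mul_subset_right.trans hwU)
  exact hcont.integrable_of_hasCompactSupport hwc.mul_left

lemma integral_sum_mul_pd_eq_neg {U : Set V3} (hU : IsOpen U) {F : Fin 3 → V3 → ℝ}
    (hF : ∀ j, ContDiffOn ℝ 1 (F j) U) {w : V3 → ℝ} (hw : ContDiff ℝ 1 w)
    (hwc : HasCompactSupport w) (hwU : tsupport w ⊆ U) :
    ∫ x, ∑ j, F j x * pd j w x = -∫ x, (∑ j, pd j (F j) x) * w x := by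
  have hFdw (j : Fin 3) : Integrable fun x => F j x * pd j w x :=
    integrable_mul_of_tsupport_subset hU (hF j).continuousOn (continuous_pd hw j)
      (hwc.of_isClosed_subset (isClosed_tsupport _) (tsupport_pd_subset j w))
      ((tsupport_pd_subset j w).trans hwU)
  have hdFw (j : Fin 3) : Integrable fun x => pd j (F j) x * w x :=
    integrable_mul_of_tsupport_subset hU (continuousOn_pd hU (hF j) j) hw.continuous hwc hwU
  have hFw (j : Fin 3) : Integrable fun x => F j x * w x :=
    integrable_mul_of_tsupport_subset hU (hF j).continuousOn hw.continuous hwc hwU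
  have hparts (j : Fin 3) : ∫ x, F j x * pd j w x = -∫ x, pd j (F j) x * w x :=
    integral_mul_fderiv_eq_neg_fderiv_mul_of_integrable (hdFw j) (hFdw j) (hFw j)
      (fun x hx => ((hF j).differentiableOn one_ne_zero).differentiableAt (hU.mem_nhds (hwU hx)))
      fun x _ => hw.differentiable one_ne_zero x
  simp_rw [Finset.sum_mul]
  rw [integral_finsetSum _ fun j _ => hFdw j, integral_finsetSum _ fun j _ => hdFw j,
    ← Finset.sum_neg_distrib]
  exact Finset.sum_congr rfl fun j _ => hparts j

lemma tsupport_coord_subset {X ι M : Type*} [TopologicalSpace X] [Zero M] (φ : X → ι → M) (i : ι) :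
    tsupport (fun z => φ z i) ⊆ tsupport φ :=
  closure_mono fun x hx hφ => hx (by simp [hφ])

variable {ι : Type*} [Fintype ι]

/-- The contraction `F : ∇φ = ∑ᵢⱼ F_{ij} ∂ⱼφᵢ` of a matrix field with the gradient of a field `φ`.
The number of components of `φ` is arbitrary, so that the momentum equation (three components) and
the continuity equation (one component) are instances of the same weak identity. -/
def gradContract (F : V3 → ι → Fin 3 → ℝ) (φ : V3 → ι → ℝ) (x : V3) : ℝ :=
  ∑ i, ∑ j, F x i j * pd j (fun z => φ z i) x

lemma gradContract_eq_zero_of_notMem_tsupport (F : V3 → ι → Fin 3 → ℝ) {φ : V3 → ι → ℝ} {x : V3}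
    (hx : x ∉ tsupport φ) : gradContract F φ x = 0 := by
  refine Finset.sum_eq_zero fun i _ => Finset.sum_eq_zero fun j _ => ?_
  have hpd : pd j (fun z => φ z i) x = 0 := image_eq_zero_of_notMem_tsupport fun h =>
    hx (tsupport_coord_subset φ i (tsupport_pd_subset j _ h))
  rw [hpd, mul_zero]

/-- The contraction `F : (φ ⊗ ∇η) = ∑ᵢⱼ F_{ij} φᵢ ∂ⱼη`, the commutator of `gradContract F` with
multiplication by a cutoff `η`. -/
def gradCommutator (F : V3 → ι → Fin 3 → ℝ) (η : V3 → ℝ) (φ : V3 → ι → ℝ) (x : V3) : ℝ :=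
  ∑ i, ∑ j, F x i j * (φ x i * pd j η x)

lemma gradCommutator_eq_zero_of_notMem_tsupport (F : V3 → ι → Fin 3 → ℝ) (η : V3 → ℝ)
    {φ : V3 → ι → ℝ} {x : V3} (hx : x ∉ tsupport φ) : gradCommutator F η φ x = 0 := by
  simp [gradCommutator, image_eq_zero_of_notMem_tsupport hx]

lemma gradContract_smul (F : V3 → ι → Fin 3 → ℝ) {η : V3 → ℝ} {φ : V3 → ι → ℝ} {x : V3}
    (hη : DifferentiableAt ℝ η x) (hφ : DifferentiableAt ℝ φ x) :
    gradContract F (fun z => η z • φ z) x =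
      η x * gradContract F φ x + gradCommutator F η φ x := by
  simp only [gradContract, gradCommutator, Pi.smul_apply, smul_eq_mul, Finset.mul_sum,
    ← Finset.sum_add_distrib]
  refine Finset.sum_congr rfl fun i _ => Finset.sum_congr rfl fun j _ => ?_
  rw [pd_mul hη (differentiableAt_pi.1 hφ i)]
  ring

lemma norm_gradCommutator_le (F : V3 → ι → Fin 3 → ℝ) (η : V3 → ℝ) (φ : V3 → ι → ℝ) (x : V3) :
    ‖gradCommutator F η φ x‖ ≤ 3 * Fintype.card ι * ‖φ x‖ * (‖F x‖ * ‖fderiv ℝ η x‖) := by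
  have hterm (i : ι) (j : Fin 3) :
      ‖F x i j * (φ x i * pd j η x)‖ ≤ ‖F x‖ * (‖φ x‖ * ‖fderiv ℝ η x‖) := by
    rw [norm_mul, norm_mul]
    gcongr
    · exact (norm_le_pi_norm (F x i) j).trans (norm_le_pi_norm (F x) i)
    · exact norm_le_pi_norm (φ x) i
    · exact abs_pd_le_norm_fderiv j η x
  calc ‖gradCommutator F η φ x‖
      ≤ ∑ _ : ι, ∑ _ : Fin 3, ‖F x‖ * (‖φ x‖ * ‖fderiv ℝ η x‖) :=
        norm_sum_le_of_le _ fun i _ => norm_sum_le_of_le _ fun j _ => hterm i j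
    _ = 3 * Fintype.card ι * ‖φ x‖ * (‖F x‖ * ‖fderiv ℝ η x‖) := by
        simp only [Finset.sum_const, Finset.card_univ, Fintype.card_fin, nsmul_eq_mul]
        push_cast
        ring

variable {U : Set V3} {F : V3 → ι → Fin 3 → ℝ} {φ : V3 → ι → ℝ}

lemma integrable_gradContract_summand (hU : IsOpen U) (hF : ContinuousOn F U) (hφ : ContDiff ℝ 1 φ)
    (hφc : HasCompactSupport φ) (hφU : tsupport φ ⊆ U) (i : ι) (j : Fin 3) :
    Integrable fun x => F x i j * pd j (fun z => φ z i) x := by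
  have hsupp : tsupport (pd j fun z => φ z i) ⊆ tsupport φ :=
    (tsupport_pd_subset j _).trans (tsupport_coord_subset φ i)
  exact integrable_mul_of_tsupport_subset hU (continuousOn_pi.1 (continuousOn_pi.1 hF i) j)
    (continuous_pd (contDiff_pi.1 hφ i) j) (hφc.of_isClosed_subset (isClosed_tsupport _) hsupp)
    (hsupp.trans hφU)

lemma integrable_gradContract (hU : IsOpen U) (hF : ContinuousOn F U) (hφ : ContDiff ℝ 1 φ)
    (hφc : HasCompactSupport φ) (hφU : tsupport φ ⊆ U) : Integrable (gradContract F φ) :=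
  integrable_finsetSum _ fun i _ => integrable_finsetSum _ fun j _ =>
    integrable_gradContract_summand hU hF hφ hφc hφU i j

lemma integral_gradContract_eq_zero (hU : IsOpen U) (hF : ContDiffOn ℝ 1 F U)
    (hdiv : ∀ x ∈ U, ∀ i, ∑ j, pd j (fun z => F z i j) x = 0) (hφ : ContDiff ℝ 1 φ)
    (hφc : HasCompactSupport φ) (hφU : tsupport φ ⊆ U) :
    ∫ x, gradContract F φ x = 0 := by
  unfold gradContract
  rw [integral_finsetSum _ fun i _ => integrable_finsetSum _ fun j _ =>
    integrable_gradContract_summand hU hF.continuousOn hφ hφc hφU i j]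
  refine Finset.sum_eq_zero fun i _ => ?_
  have hsupp := tsupport_coord_subset φ i
  rw [integral_sum_mul_pd_eq_neg hU (F := fun j z => F z i j)
    (fun j => contDiffOn_pi.1 (contDiffOn_pi.1 hF i) j) (contDiff_pi.1 hφ i)
    (hφc.of_isClosed_subset (isClosed_tsupport _) hsupp) (hsupp.trans hφU), neg_eq_zero]
  refine integral_eq_zero_of_ae (Eventually.of_forall fun x => ?_)
  by_cases hx : x ∈ tsupport φ
  · simp [hdiv x (hφU hx) i]
  · simp [image_eq_zero_of_notMem_tsupport hx]

lemma integrable_gradCommutator (hU : IsOpen U) (hF : ContinuousOn F U) {η : V3 → ℝ}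
    (hη : ContDiff ℝ 1 η) (hφ : Continuous φ) (hφc : HasCompactSupport φ)
    (hηφU : tsupport η ∩ tsupport φ ⊆ U) :
    Integrable (gradCommutator F η φ) := by
  refine integrable_finsetSum _ fun i _ => integrable_finsetSum _ fun j _ => ?_
  have hi := tsupport_coord_subset φ i
  have hφic : HasCompactSupport fun z => φ z i := hφc.of_isClosed_subset (isClosed_tsupport _) hi
  refine integrable_mul_of_tsupport_subset hU (continuousOn_pi.1 (continuousOn_pi.1 hF i) j)
    ((continuous_pi_iff.1 hφ i).mul (continuous_pd hη j)) hφic.mul_right ?_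
  exact (Set.subset_inter (tsupport_mul_subset_right.trans (tsupport_pd_subset j η))
    (tsupport_mul_subset_left.trans hi)).trans hηφU

lemma integral_mul_gradContract_eq_neg (hU : IsOpen U) (hF : ContDiffOn ℝ 1 F U)
    (hdiv : ∀ x ∈ U, ∀ i, ∑ j, pd j (fun z => F z i j) x = 0) {η : V3 → ℝ}
    (hη : ContDiff ℝ 1 η) (hφ : ContDiff ℝ 1 φ) (hφc : HasCompactSupport φ)
    (hηφU : tsupport η ∩ tsupport φ ⊆ U) :
    ∫ x, η x * gradContract F φ x = -∫ x, gradCommutator F η φ x := by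
  have hηφ : ContDiff ℝ 1 fun z => η z • φ z := hη.smul hφ
  have hsupp : tsupport (fun z => η z • φ z) ⊆ U :=
    (Set.subset_inter (tsupport_smul_subset_left η φ) (tsupport_smul_subset_right η φ)).trans hηφU
  have hcompact : HasCompactSupport fun z => η z • φ z :=
    hφc.of_isClosed_subset (isClosed_tsupport _) (tsupport_smul_subset_right η φ)
  have hsplit (x : V3) : η x * gradContract F φ x =
      gradContract F (fun z => η z • φ z) x - gradCommutator F η φ x :=
    eq_sub_of_add_eq (gradContract_smul F (hη.differentiable one_ne_zero x)
      (hφ.differentiable one_ne_zero x)).symm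
  simp_rw [hsplit]
  rw [integral_sub (integrable_gradContract hU hF.continuousOn hηφ hcompact hsupp)
    (integrable_gradCommutator hU hF.continuousOn hη hφ.continuous hφc hηφU),
    integral_gradContract_eq_zero hU hF hdiv hηφ hcompact hsupp, zero_sub]

end IntegrationByParts

section Axis

lemma continuous_rho : Continuous rho := by
  unfold rho
  fun_prop

lemma rho_nonneg (x : V3) : 0 ≤ rho x := Real.sqrt_nonneg _

lemma sq_rho (x : V3) : rho x ^ 2 = x 0 ^ 2 + x 1 ^ 2 := Real.sq_sqrt (by positivity)

lemma rho_eq_zero_iff {x : V3} : rho x = 0 ↔ x ∈ axis3 := by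
  rw [rho, Real.sqrt_eq_zero (by positivity), add_eq_zero_iff_of_nonneg (sq_nonneg _) (sq_nonneg _),
    sq_eq_zero_iff, sq_eq_zero_iff]
  rfl

lemma isClosed_axis3 : IsClosed axis3 := by
  have h : axis3 = rho ⁻¹' {0} := Set.ext fun _ => rho_eq_zero_iff.symm
  exact h ▸ isClosed_singleton.preimage continuous_rho

lemma volume_axis3 : volume axis3 = 0 := by
  let W : Submodule ℝ V3 := LinearMap.ker (EuclideanSpace.projₗ (𝕜 := ℝ) (0 : Fin 3))
  have hW : W ≠ ⊤ := fun htop => by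
    have he : e3 0 ∈ W := htop ▸ Submodule.mem_top
    simp [W, e3] at he
  exact measure_mono_null (fun x hx => by simpa [W] using hx.1) (Measure.addHaar_submodule _ W hW)

lemma ae_restrict_mem_sdiff_axis3 {Ω : Set V3} (hΩ : MeasurableSet Ω) :
    ∀ᵐ x ∂volume.restrict Ω, x ∈ Ω \ axis3 := by
  filter_upwards [ae_restrict_mem hΩ,
    ae_restrict_of_ae (measure_eq_zero_iff_ae_notMem.1 volume_axis3)] with x hx hx' using ⟨hx, hx'⟩

lemma aestronglyMeasurable_restrict_of_continuousOn_sdiff_axis3 {E : Type*} [NormedAddCommGroup E]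
    [SecondCountableTopology E] {Ω : Set V3} (hΩ : MeasurableSet Ω) {f : V3 → E}
    (hf : ContinuousOn f (Ω \ axis3)) : AEStronglyMeasurable f (volume.restrict Ω) := by
  rw [← Measure.restrict_congr_set (sdiff_null_ae_eq_self volume_axis3)]
  exact hf.aestronglyMeasurable (hΩ.diff isClosed_axis3.measurableSet)

/-- The open tube `{|x'| < ε}` around the `x₃`-axis; `Ω \ axisTube ε` plays the role of
`Ω_{a,b,R} \ Ω_{a,b,ε}` in a domain `Ω` that need not be a cylinder. -/
def axisTube (ε : ℝ) : Set V3 := {x | rho x < ε}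

lemma isOpen_axisTube (ε : ℝ) : IsOpen (axisTube ε) := isOpen_lt continuous_rho continuous_const

lemma isOpen_OmegaR (a b R : ℝ) : IsOpen (OmegaR a b R) := by
  have h2 : Continuous fun x : V3 => x 2 := by fun_prop
  exact (isOpen_lt continuous_const h2).inter
    ((isOpen_lt h2 continuous_const).inter (isOpen_axisTube R))

lemma OmegaR_sdiff_OmegaR (a b R ε : ℝ) :
    OmegaR a b R \ OmegaR a b ε = OmegaR a b R \ axisTube ε := by
  ext x
  simp only [OmegaR, axisTube, Set.mem_sdiff, Set.mem_ofPred_eq]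
  tauto

end Axis

section LogarithmicCutoff

lemma volume_setOf_forall_abs_lt {ι : Type*} [Fintype ι] (r : ι → ℝ) :
    volume {x : EuclideanSpace ℝ ι | ∀ i, |x i| < r i} = ∏ i, ENNReal.ofReal (2 * r i) := by
  have hset : {x : EuclideanSpace ℝ ι | ∀ i, |x i| < r i} =
      (@WithLp.ofLp 2 (ι → ℝ)) ⁻¹' Set.univ.pi fun i => Set.Ioo (-r i) (r i) := by
    ext x
    simp [abs_lt]
  rw [hset, (PiLp.volume_preserving_ofLp ι).measure_preimage
    (MeasurableSet.univ_pi fun i => measurableSet_Ioo).nullMeasurableSet, Real.volume_pi_Ioo]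
  simp only [sub_neg_eq_add, two_mul]

lemma lintegral_ofReal_inv_Ioc_one {T : ℝ} (hT : 1 ≤ T) :
    ∫⁻ t in Set.Ioc 1 T, ENNReal.ofReal t⁻¹ = ENNReal.ofReal (Real.log T) := by
  have hpos : ∀ t ∈ Set.Icc 1 T, t ≠ 0 := fun t ht => (one_pos.trans_le ht.1).ne'
  have hint : IntegrableOn (fun t : ℝ => t⁻¹) (Set.Ioc 1 T) :=
    ((continuousOn_inv₀.mono hpos).integrableOn_Icc).mono_set Set.Ioc_subset_Icc_self
  have hnonneg : 0 ≤ᵐ[volume.restrict (Set.Ioc 1 T)] fun t : ℝ => t⁻¹ := by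
    filter_upwards [ae_restrict_mem measurableSet_Ioc] with t ht
    exact inv_nonneg.2 (one_pos.trans ht.1).le
  rw [← ofReal_integral_eq_lintegral_ofReal hint hnonneg, ← intervalIntegral.integral_of_le hT,
    integral_inv_of_pos one_pos (one_pos.trans_le hT), div_one]

lemma lintegral_ofReal_le_add_mul_log {α : Type*} [MeasurableSpace α] {μ : Measure α} {f : α → ℝ}
    (hf : AEMeasurable f μ) (hf0 : ∀ x, 0 ≤ f x) {T : ℝ} (hT : 1 ≤ T) (hfT : ∀ x, f x ≤ T)
    {B : ℝ≥0∞} (hB : ∀ t, 1 < t → μ {x | t < f x} ≤ B * ENNReal.ofReal t⁻¹) :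
    ∫⁻ x, ENNReal.ofReal (f x) ∂μ ≤ μ Set.univ + B * ENNReal.ofReal (Real.log T) := by
  have hsplit : Set.Ioi (0 : ℝ) = Set.Ioc 0 1 ∪ Set.Ioc 1 T ∪ Set.Ioi T := by
    rw [Set.Ioc_union_Ioc_eq_Ioc zero_le_one hT, Set.Ioc_union_Ioi_eq_Ioi (zero_le_one.trans hT)]
  have hlow : ∫⁻ t in Set.Ioc (0 : ℝ) 1, μ {x | t < f x} ≤ μ Set.univ :=
    (lintegral_mono fun t => measure_mono (Set.subset_univ _)).trans (by simp)
  have hmid : ∫⁻ t in Set.Ioc 1 T, μ {x | t < f x} ≤ B * ENNReal.ofReal (Real.log T) := by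
    rw [← lintegral_ofReal_inv_Ioc_one hT, ← lintegral_const_mul _ (by fun_prop)]
    exact setLIntegral_mono' measurableSet_Ioc fun t ht => hB t ht.1
  have hhigh : ∫⁻ t in Set.Ioi T, μ {x | t < f x} = 0 := by
    refine setLIntegral_eq_zero measurableSet_Ioi fun t (ht : T < t) => ?_
    simp [((hfT _).trans ht.le).not_gt]
  rw [lintegral_eq_lintegral_meas_lt μ (Eventually.of_forall hf0) hf, hsplit]
  refine (lintegral_union_le _ _ _).trans ?_
  rw [hhigh, add_zero]
  exact (lintegral_union_le _ _ _).trans (add_le_add hlow hmid)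

/-- The regularisation `|x'|² + ε²` of the squared distance to the axis. -/
def axisSq (ε : ℝ) (x : V3) : ℝ := x 0 ^ 2 + x 1 ^ 2 + ε ^ 2

lemma axisSq_eq (ε : ℝ) (x : V3) : axisSq ε x = rho x ^ 2 + ε ^ 2 := by rw [sq_rho, axisSq]

lemma axisSq_pos {ε : ℝ} (hε : 0 < ε) (x : V3) : 0 < axisSq ε x := by
  unfold axisSq
  positivity

lemma contDiff_axisSq {n : WithTop ℕ∞} (ε : ℝ) : ContDiff ℝ n (axisSq ε) := by
  unfold axisSq
  fun_prop

lemma volume_setOf_lt_inv_axisSq_inter_ball_le {ε t : ℝ} (hε : 0 < ε) (ht : 0 < t) (M : ℝ) :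
    volume ({x | t < (axisSq ε x)⁻¹} ∩ ball 0 M) ≤ ENNReal.ofReal (8 * M) * ENNReal.ofReal t⁻¹ := by
  let s := √t⁻¹
  have hbox : {x | t < (axisSq ε x)⁻¹} ∩ ball 0 M ⊆
      {x : V3 | ∀ i, |x i| < (![s, s, M] : Fin 3 → ℝ) i} := by
    rintro x ⟨htx, hx⟩
    have hsq : x 0 ^ 2 + x 1 ^ 2 + ε ^ 2 < t⁻¹ := (lt_inv_comm₀ ht (axisSq_pos hε x)).1 htx
    have hε2 : 0 < ε ^ 2 := by positivity
    have h0 : |x 0| < s := Real.lt_sqrt_of_sq_lt (by rw [sq_abs]; linarith [sq_nonneg (x 1)])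
    have h1 : |x 1| < s := Real.lt_sqrt_of_sq_lt (by rw [sq_abs]; linarith [sq_nonneg (x 0)])
    have h2 : |x 2| < M := (PiLp.norm_apply_le (p := 2) x 2).trans_lt (mem_ball_zero_iff.1 hx)
    simpa [Fin.forall_fin_succ] using ⟨h0, h1, h2⟩
  refine (measure_mono hbox).trans_eq ?_
  have hs : s * s = t⁻¹ := Real.mul_self_sqrt (inv_nonneg.2 ht.le)
  have : 0 ≤ s := Real.sqrt_nonneg _
  rw [volume_setOf_forall_abs_lt, Fin.prod_univ_three,
    ← ENNReal.ofReal_mul' (inv_nonneg.2 ht.le), ← hs]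
  simp only [Matrix.cons_val_zero, Matrix.cons_val_one, Matrix.cons_val]
  rw [← ENNReal.ofReal_mul (by positivity), ← ENNReal.ofReal_mul (by positivity)]
  congr 1
  ring

lemma one_le_abs_log {ε : ℝ} (hε : 0 < ε) (hε' : ε ≤ 1 / 4) : 1 ≤ |Real.log ε| := by
  have hlog : Real.log ε ≤ -1 := by
    rw [Real.log_le_iff_le_exp hε, Real.exp_neg]
    refine hε'.trans ?_
    rw [one_div]
    exact inv_anti₀ (Real.exp_pos 1) (by linarith [Real.exp_one_lt_d9])
  rw [abs_of_nonpos (by linarith)]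
  linarith

lemma lintegral_ball_inv_axisSq_le {ε : ℝ} (hε : 0 < ε) (hε' : ε ≤ 1 / 4) (M : ℝ) :
    ∫⁻ x in ball 0 M, ENNReal.ofReal (axisSq ε x)⁻¹ ≤
      (volume (ball (0 : V3) M) + ENNReal.ofReal (8 * M) * 2) * ENNReal.ofReal |Real.log ε| := by
  have hcont : Continuous fun x => (axisSq ε x)⁻¹ :=
    (contDiff_axisSq (n := 0) ε).continuous.inv₀ fun x => (axisSq_pos hε x).ne'
  have hT : 1 ≤ (ε ^ 2)⁻¹ := (one_le_inv₀ (by positivity)).2 (by nlinarith)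
  have hlogT : Real.log (ε ^ 2)⁻¹ = 2 * |Real.log ε| := by
    rw [Real.log_inv, Real.log_pow, abs_of_nonpos (Real.log_nonpos hε.le (by linarith))]
    push_cast
    ring
  have hle : ∀ x, (axisSq ε x)⁻¹ ≤ (ε ^ 2)⁻¹ := fun x =>
    inv_anti₀ (by positivity) (by rw [axisSq_eq]; linarith [sq_nonneg (rho x)])
  have hweak : ∀ t, 1 < t → volume.restrict (ball 0 M) {x | t < (axisSq ε x)⁻¹} ≤
      ENNReal.ofReal (8 * M) * ENNReal.ofReal t⁻¹ := fun t ht => by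
    rw [Measure.restrict_apply (measurableSet_lt measurable_const hcont.measurable)]
    exact volume_setOf_lt_inv_axisSq_inter_ball_le hε (one_pos.trans ht) M
  refine (lintegral_ofReal_le_add_mul_log hcont.aemeasurable
    (fun x => inv_nonneg.2 (axisSq_pos hε x).le) hT hle hweak).trans ?_
  rw [Measure.restrict_apply_univ, hlogT, ENNReal.ofReal_mul zero_le_two, ENNReal.ofReal_ofNat,
    add_mul, ← mul_assoc]
  gcongr
  exact le_mul_of_one_le_right' (ENNReal.one_le_ofReal.2 (one_le_abs_log hε hε'))

/-- The logarithmic cutoff: it vanishes for `|x'| < ε`, equals `1` for `|x'|² ≥ ε`, and is linear in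
`ln (|x'|² + ε²) / ln ε` in between, up to smoothing. -/
def logCutoff (ε : ℝ) (x : V3) : ℝ :=
  Real.smoothTransition (3 - 2 * Real.log (axisSq ε x) / Real.log ε)

lemma logCutoff_nonneg (ε : ℝ) (x : V3) : 0 ≤ logCutoff ε x := Real.smoothTransition.nonneg _

lemma logCutoff_le_one (ε : ℝ) (x : V3) : logCutoff ε x ≤ 1 := Real.smoothTransition.le_one _

lemma contDiff_logCutoff {n : ℕ∞} {ε : ℝ} (hε : 0 < ε) : ContDiff ℝ n (logCutoff ε) :=
  Real.smoothTransition.contDiff.comp <| contDiff_const.sub <|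
    (contDiff_const.mul ((contDiff_axisSq ε).log fun x => (axisSq_pos hε x).ne')).div_const _

lemma logCutoff_eq_zero {ε : ℝ} (hε : 0 < ε) (hε' : ε ≤ 1 / 4) {x : V3} (hx : x ∈ axisTube ε) :
    logCutoff ε x = 0 := by
  have hlog : Real.log ε < 0 := Real.log_neg hε (by linarith)
  have hle : axisSq ε x ^ 2 ≤ ε ^ 3 := by
    have hrho : rho x ^ 2 < ε ^ 2 := pow_lt_pow_left₀ hx (rho_nonneg x) two_ne_zero
    calc axisSq ε x ^ 2 ≤ (2 * ε ^ 2) ^ 2 :=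
          pow_le_pow_left₀ (axisSq_pos hε x).le (by rw [axisSq_eq]; linarith) 2
      _ = 4 * ε * ε ^ 3 := by ring
      _ ≤ ε ^ 3 := mul_le_of_le_one_left (by positivity) (by linarith)
  have hlogle := Real.log_le_log (pow_pos (axisSq_pos hε x) 2) hle
  rw [Real.log_pow, Real.log_pow] at hlogle
  refine Real.smoothTransition.zero_of_nonpos (sub_nonpos.2 ((le_div_iff_of_neg hlog).2 ?_))
  exact_mod_cast hlogle

lemma logCutoff_eq_one {ε : ℝ} (hε : 0 < ε) (hε' : ε < 1) {x : V3} (hx : ε ≤ rho x ^ 2) :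
    logCutoff ε x = 1 := by
  have hlog : Real.log ε < 0 := Real.log_neg hε hε'
  have hlogle : Real.log ε ≤ Real.log (axisSq ε x) :=
    Real.log_le_log hε (by rw [axisSq_eq]; linarith [sq_nonneg ε])
  have hratio : 2 * Real.log (axisSq ε x) / Real.log ε ≤ 2 :=
    (div_le_iff_of_neg hlog).2 (by linarith)
  exact Real.smoothTransition.one_of_one_le (by linarith)

lemma tsupport_logCutoff_subset {ε : ℝ} (hε : 0 < ε) (hε' : ε ≤ 1 / 4) :
    tsupport (logCutoff ε) ⊆ (axisTube ε)ᶜ :=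
  closure_minimal (fun _ hx hxε => hx (logCutoff_eq_zero hε hε' hxε))
    (isOpen_axisTube ε).isClosed_compl

lemma eventually_logCutoff_eq_one {x : V3} (hx : x ∉ axis3) :
    ∀ᶠ ε in 𝓝[>] (0 : ℝ), logCutoff ε x = 1 := by
  have hrho : 0 < rho x ^ 2 := by
    have : rho x ≠ 0 := rho_eq_zero_iff.not.2 hx
    positivity
  filter_upwards [Ioo_mem_nhdsGT (lt_min hrho one_pos)] with ε hε
  exact logCutoff_eq_one hε.1 (hε.2.trans_le (min_le_right _ _)) (hε.2.le.trans (min_le_left _ _))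

lemma exists_abs_deriv_smoothTransition_le :
    ∃ C, ∀ t, |deriv Real.smoothTransition t| ≤ C := by
  have hcont : Continuous (deriv Real.smoothTransition) :=
    (Real.smoothTransition.contDiff (n := 1)).continuous_deriv le_rfl
  refine hcont.bounded_above_of_compact_support
    (HasCompactSupport.intro (isCompact_Icc (a := (0 : ℝ)) (b := 1)) fun t ht => ?_)
  rcases not_and_or.1 ht with h | h
  · have hconst : Real.smoothTransition =ᶠ[𝓝 t] fun _ => 0 := by
      filter_upwards [Iio_mem_nhds (not_le.1 h)] with y hy
      exact Real.smoothTransition.zero_of_nonpos (le_of_lt hy)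
    simp [hconst.deriv_eq]
  · have hconst : Real.smoothTransition =ᶠ[𝓝 t] fun _ => 1 := by
      filter_upwards [Ioi_mem_nhds (not_le.1 h)] with y hy
      exact Real.smoothTransition.one_of_one_le (le_of_lt hy)
    simp [hconst.deriv_eq]

lemma sq_norm_fderiv_axisSq_le (ε : ℝ) (x : V3) : ‖fderiv ℝ (axisSq ε) x‖ ^ 2 ≤ 4 * axisSq ε x := by
  have hproj (i : Fin 3) : HasFDerivAt (fun y : V3 => y i) (EuclideanSpace.proj (𝕜 := ℝ) i) x :=
    (EuclideanSpace.proj (𝕜 := ℝ) i : V3 →L[ℝ] ℝ).hasFDerivAt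
  have hderiv : HasFDerivAt (axisSq ε) _ x :=
    (((hproj 0).pow 2).add ((hproj 1).pow 2)).add_const (ε ^ 2)
  have hbound : ‖fderiv ℝ (axisSq ε) x‖ ≤ 2 * rho x := by
    refine ContinuousLinearMap.opNorm_le_bound _ (by linarith [rho_nonneg x]) fun h => ?_
    have happly : fderiv ℝ (axisSq ε) x h = 2 * x 0 * h 0 + 2 * x 1 * h 1 := by
      rw [hderiv.fderiv]
      simp
    rw [happly, Real.norm_eq_abs]
    refine abs_le_of_sq_le_sq ?_ (by have := rho_nonneg x; positivity)
    rw [mul_pow, mul_pow, sq_rho, EuclideanSpace.real_norm_sq_eq, Fin.sum_univ_three]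
    nlinarith [sq_nonneg (x 0 * h 1 - x 1 * h 0), sq_nonneg (x 0 * h 2), sq_nonneg (x 1 * h 2)]
  calc ‖fderiv ℝ (axisSq ε) x‖ ^ 2 ≤ (2 * rho x) ^ 2 := by gcongr
    _ ≤ 4 * axisSq ε x := by rw [axisSq_eq]; nlinarith [sq_nonneg ε]

lemma exists_sq_norm_fderiv_logCutoff_le : ∃ C, 0 ≤ C ∧ ∀ ε, 0 < ε → ∀ x,
    ‖fderiv ℝ (logCutoff ε) x‖ ^ 2 ≤ C / |Real.log ε| ^ 2 * (axisSq ε x)⁻¹ := by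
  obtain ⟨C, hC⟩ := exists_abs_deriv_smoothTransition_le
  refine ⟨16 * C ^ 2, by positivity, fun ε hε x => ?_⟩
  have hs : 0 < axisSq ε x := axisSq_pos hε x
  set t := 3 - 2 * Real.log (axisSq ε x) / Real.log ε
  have hS : HasDerivAt Real.smoothTransition (deriv Real.smoothTransition t) t :=
    ((Real.smoothTransition.contDiff (n := 1)).differentiable one_ne_zero _).hasDerivAt
  have hlog := ((contDiff_axisSq (n := 1) ε).differentiable one_ne_zero x).hasFDerivAt.log hs.ne'
  have hη : HasFDerivAt (logCutoff ε) _ x :=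
    hS.comp_hasFDerivAt x (((hlog.const_mul 2).mul_const (Real.log ε)⁻¹).const_sub 3)
  have hsq : ‖fderiv ℝ (logCutoff ε) x‖ ^ 2 =
      4 * deriv Real.smoothTransition t ^ 2 / |Real.log ε| ^ 2 * (axisSq ε x)⁻¹ ^ 2 *
        ‖fderiv ℝ (axisSq ε) x‖ ^ 2 := by
    rw [hη.fderiv]
    simp only [norm_smul, norm_neg, norm_inv, Real.norm_eq_abs, mul_pow, sq_abs]
    norm_num
    ring
  have hD : deriv Real.smoothTransition t ^ 2 ≤ C ^ 2 :=
    sq_le_sq' (abs_le.1 (hC t)).1 (abs_le.1 (hC t)).2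
  calc ‖fderiv ℝ (logCutoff ε) x‖ ^ 2
      ≤ 4 * C ^ 2 / |Real.log ε| ^ 2 * (axisSq ε x)⁻¹ ^ 2 * (4 * axisSq ε x) := by
        rw [hsq]
        gcongr
        exact sq_norm_fderiv_axisSq_le ε x
    _ = 16 * C ^ 2 / |Real.log ε| ^ 2 * (axisSq ε x)⁻¹ := by
        field_simp
        ring

end LogarithmicCutoff

open scoped NNReal

section Capacity

lemma exists_lintegral_sq_enorm_fderiv_logCutoff_le (M : ℝ) : ∃ D : ℝ≥0∞, D ≠ ⊤ ∧
    ∀ ε, 0 < ε → ε ≤ 1 / 4 → ∫⁻ x in ball 0 M, ‖fderiv ℝ (logCutoff ε) x‖ₑ ^ 2 ≤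
      D / ENNReal.ofReal |Real.log ε| := by
  obtain ⟨C, hC, hbound⟩ := exists_sq_norm_fderiv_logCutoff_le
  set V := volume (ball (0 : V3) M) + ENNReal.ofReal (8 * M) * 2
  have hV : V ≠ ⊤ := ENNReal.add_ne_top.2
    ⟨measure_ball_lt_top.ne, ENNReal.mul_ne_top ENNReal.ofReal_ne_top ENNReal.ofNat_ne_top⟩
  refine ⟨ENNReal.ofReal C * V, ENNReal.mul_ne_top ENNReal.ofReal_ne_top hV, fun ε hε hε' => ?_⟩
  have hL : 0 < |Real.log ε| := one_pos.trans_le (one_le_abs_log hε hε')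
  have hpoint (x : V3) : ‖fderiv ℝ (logCutoff ε) x‖ₑ ^ 2 ≤
      ENNReal.ofReal (C / |Real.log ε| ^ 2) * ENNReal.ofReal (axisSq ε x)⁻¹ := by
    rw [← ofReal_norm, ← ENNReal.ofReal_pow (norm_nonneg _), ← ENNReal.ofReal_mul (by positivity)]
    exact ENNReal.ofReal_le_ofReal (hbound ε hε x)
  calc ∫⁻ x in ball 0 M, ‖fderiv ℝ (logCutoff ε) x‖ₑ ^ 2
      ≤ ∫⁻ x in ball 0 M, ENNReal.ofReal (C / |Real.log ε| ^ 2) *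
          ENNReal.ofReal (axisSq ε x)⁻¹ := lintegral_mono hpoint
    _ = ENNReal.ofReal (C / |Real.log ε| ^ 2) *
          ∫⁻ x in ball 0 M, ENNReal.ofReal (axisSq ε x)⁻¹ :=
        lintegral_const_mul' _ _ ENNReal.ofReal_ne_top
    _ ≤ ENNReal.ofReal (C / |Real.log ε| ^ 2) * (V * ENNReal.ofReal |Real.log ε|) := by
        gcongr
        exact lintegral_ball_inv_axisSq_le hε hε' M
    _ = ENNReal.ofReal (C / |Real.log ε| ^ 2 * |Real.log ε|) * V := by
        rw [ENNReal.ofReal_mul (by positivity)]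
        ring
    _ = ENNReal.ofReal C * V / ENNReal.ofReal |Real.log ε| := by
        rw [show C / |Real.log ε| ^ 2 * |Real.log ε| = C / |Real.log ε| by field_simp,
          ENNReal.ofReal_div_of_pos hL, div_eq_mul_inv, div_eq_mul_inv]
        ring

lemma exists_eLpNorm_fderiv_logCutoff_le (M : ℝ) : ∃ D : ℝ≥0∞, D ≠ ⊤ ∧
    ∀ ε, 0 < ε → ε ≤ 1 / 4 → eLpNorm (fderiv ℝ (logCutoff ε)) 2 (volume.restrict (ball 0 M)) ≤
      D / ENNReal.ofReal √|Real.log ε| := by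
  obtain ⟨D, hD, hbound⟩ := exists_lintegral_sq_enorm_fderiv_logCutoff_le M
  refine ⟨D ^ (1 / 2 : ℝ), ENNReal.rpow_ne_top_of_nonneg (by norm_num) hD, fun ε hε hε' => ?_⟩
  rw [Real.sqrt_eq_rpow, ← ENNReal.ofReal_rpow_of_nonneg (abs_nonneg _) (by norm_num),
    ← ENNReal.div_rpow_of_nonneg _ _ (by norm_num),
    eLpNorm_eq_lintegral_rpow_enorm_toReal two_ne_zero ENNReal.ofNat_ne_top, ENNReal.toReal_ofNat]
  simp only [ENNReal.rpow_ofNat]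
  gcongr
  exact hbound ε hε hε'

lemma tendsto_setIntegral_logCutoff_mul {Ω : Set V3} {A : V3 → ℝ} (hA : IntegrableOn A Ω) :
    Tendsto (fun ε => ∫ x in Ω, logCutoff ε x * A x) (𝓝[>] 0) (𝓝 (∫ x in Ω, A x)) := by
  refine tendsto_integral_filter_of_dominated_convergence (fun x => ‖A x‖) ?_ ?_ hA.norm ?_
  · filter_upwards [self_mem_nhdsWithin] with ε hε
    exact (contDiff_logCutoff (n := 0) hε).continuous.aestronglyMeasurable.mul
      hA.aestronglyMeasurable
  · refine Eventually.of_forall fun ε => Eventually.of_forall fun x => ?_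
    rw [norm_mul, Real.norm_of_nonneg (logCutoff_nonneg ε x)]
    exact mul_le_of_le_one_left (norm_nonneg _) (logCutoff_le_one ε x)
  · filter_upwards [ae_restrict_of_ae (measure_eq_zero_iff_ae_notMem.1 volume_axis3)] with x hx
    refine tendsto_const_nhds.congr' ?_
    filter_upwards [eventually_logCutoff_eq_one hx] with ε hε
    rw [hε, one_mul]

/-- The condition `‖f‖_{L²(Ω \ axisTube ε)} = o(√|ln ε|)` as `ε → 0⁺`, under which a singularity of
`f` on the axis is invisible to the weak formulation. The norms take values in `[0, ∞]`, so the
condition includes their finiteness for small `ε`. -/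
def SublogEnergy {E : Type*} [NormedAddCommGroup E] (Ω : Set V3) (f : V3 → E) : Prop :=
  Tendsto (fun ε => eLpNorm f 2 (volume.restrict (Ω \ axisTube ε)) / ENNReal.ofReal √|Real.log ε|)
    (𝓝[>] 0) (𝓝 0)

variable {ι : Type*} [Fintype ι] {Ω : Set V3} {F : V3 → ι → Fin 3 → ℝ} {φ : V3 → ι → ℝ}

lemma gradCommutator_logCutoff_eq_zero (F : V3 → ι → Fin 3 → ℝ) (φ : V3 → ι → ℝ) {ε : ℝ}
    (hε : 0 < ε) (hε' : ε ≤ 1 / 4) {x : V3} (hx : x ∈ axisTube ε) :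
    gradCommutator F (logCutoff ε) φ x = 0 := by
  have hDη : fderiv ℝ (logCutoff ε) x = 0 := image_eq_zero_of_notMem_tsupport fun h =>
    tsupport_logCutoff_subset hε hε' (tsupport_fderiv_subset ℝ h) hx
  simpa [hDη] using norm_gradCommutator_le F (logCutoff ε) φ x

lemma lintegral_enorm_gradCommutator_logCutoff_le (hΩ : MeasurableSet Ω)
    (hF : AEStronglyMeasurable F (volume.restrict Ω)) {M : ℝ} (hφM : tsupport φ ⊆ ball 0 M)
    {K : ℝ≥0} (hK : ∀ x, ‖φ x‖ ≤ K) {ε : ℝ} (hε : 0 < ε) (hε' : ε ≤ 1 / 4) :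
    ∫⁻ x in Ω, ‖gradCommutator F (logCutoff ε) φ x‖ₑ ≤
      ↑(3 * Fintype.card ι * K) * eLpNorm F 2 (volume.restrict (Ω \ axisTube ε)) *
        eLpNorm (fderiv ℝ (logCutoff ε)) 2 (volume.restrict (ball 0 M)) := by
  have hη := contDiff_logCutoff (n := 1) hε
  set η := logCutoff ε
  set B := gradCommutator F η φ
  set S := (Ω \ axisTube ε) ∩ ball 0 M
  have hS : MeasurableSet S :=
    (hΩ.diff (isOpen_axisTube ε).measurableSet).inter measurableSet_ball
  have hzero : ∀ x ∈ Ω, x ∉ S → B x = 0 := fun x hxΩ hxS => by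
    by_cases hx : x ∈ axisTube ε
    · exact gradCommutator_logCutoff_eq_zero F φ hε hε' hx
    · exact gradCommutator_eq_zero_of_notMem_tsupport F η fun h => hxS ⟨⟨hxΩ, hx⟩, hφM h⟩
  have hbound (x : V3) : ‖B x‖ ≤ 3 * Fintype.card ι * K * (‖F x‖ * ‖fderiv ℝ η x‖) :=
    (norm_gradCommutator_le F η φ x).trans (by gcongr; exact hK x)
  have hSΩ : S ⊆ Ω := Set.inter_subset_left.trans Set.sdiff_subset
  calc ∫⁻ x in Ω, ‖B x‖ₑ ≤ ∫⁻ x in S, ‖B x‖ₑ := by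
        rw [← lintegral_indicator hΩ, ← lintegral_indicator hS]
        refine lintegral_mono fun x => ?_
        by_cases hxS : x ∈ S
        · simp [hxS, hSΩ hxS]
        · simpa [hxS] using fun hxΩ => hzero x hxΩ hxS
    _ = eLpNorm B 1 (volume.restrict S) := eLpNorm_one_eq_lintegral_enorm.symm
    _ ≤ eLpNorm (fun x => 3 * Fintype.card ι * K * (‖F x‖ * ‖fderiv ℝ η x‖)) 1
          (volume.restrict S) := eLpNorm_mono_real hbound
    _ ≤ ↑(3 * Fintype.card ι * K) * eLpNorm F 2 (volume.restrict S) *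
          eLpNorm (fderiv ℝ η) 2 (volume.restrict S) :=
        eLpNorm_le_eLpNorm_mul_eLpNorm'_of_norm (hF.mono_measure (Measure.restrict_mono_set _ hSΩ))
          (hη.continuous_fderiv one_ne_zero).aestronglyMeasurable
          (fun A D => 3 * Fintype.card ι * (K : ℝ) * (‖A‖ * ‖D‖)) _
          (Eventually.of_forall fun x => by
            rw [Real.norm_of_nonneg (by positivity)]; push_cast; exact (mul_assoc _ _ _).ge)
    _ ≤ ↑(3 * Fintype.card ι * K) * eLpNorm F 2 (volume.restrict (Ω \ axisTube ε)) *
          eLpNorm (fderiv ℝ η) 2 (volume.restrict (ball 0 M)) := by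
        gcongr
        · exact Set.inter_subset_left
        · exact Set.inter_subset_right

lemma enorm_setIntegral_logCutoff_mul_gradContract_le (hΩ : IsOpen Ω)
    (hF : ContDiffOn ℝ 1 F (Ω \ axis3))
    (hdiv : ∀ x ∈ Ω \ axis3, ∀ i, ∑ j, pd j (fun z => F z i j) x = 0) (hφ : ContDiff ℝ 1 φ)
    (hφc : HasCompactSupport φ) (hφΩ : tsupport φ ⊆ Ω) {ε : ℝ} (hε : 0 < ε) (hε' : ε ≤ 1 / 4) :
    ‖∫ x in Ω, logCutoff ε x * gradContract F φ x‖ₑ ≤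
      ∫⁻ x in Ω, ‖gradCommutator F (logCutoff ε) φ x‖ₑ := by
  have hsupp : tsupport (logCutoff ε) ∩ tsupport φ ⊆ Ω \ axis3 := fun x hx =>
    ⟨hφΩ hx.2, fun hax => tsupport_logCutoff_subset hε hε' hx.1
      ((rho_eq_zero_iff.2 hax).trans_lt hε)⟩
  rw [setIntegral_eq_integral_of_forall_compl_eq_zero fun x hx => by
      rw [gradContract_eq_zero_of_notMem_tsupport F fun h => hx (hφΩ h), mul_zero],
    integral_mul_gradContract_eq_neg (hΩ.sdiff isClosed_axis3) hF hdiv (contDiff_logCutoff hε)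
      hφ hφc hsupp, enorm_neg,
    ← setIntegral_eq_integral_of_forall_compl_eq_zero (s := Ω) fun x hx =>
      gradCommutator_eq_zero_of_notMem_tsupport F _ fun h => hx (hφΩ h)]
  exact enorm_integral_le_lintegral_enorm _

theorem SublogEnergy.setIntegral_gradContract_eq_zero (hE : SublogEnergy Ω F) (hΩ : IsOpen Ω)
    (hF : ContDiffOn ℝ 1 F (Ω \ axis3))
    (hdiv : ∀ x ∈ Ω \ axis3, ∀ i, ∑ j, pd j (fun z => F z i j) x = 0) (hφ : ContDiff ℝ 1 φ)
    (hφc : HasCompactSupport φ) (hφΩ : tsupport φ ⊆ Ω) (hint : IntegrableOn (gradContract F φ) Ω) :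
    ∫ x in Ω, gradContract F φ x = 0 := by
  obtain ⟨M, hM⟩ := hφc.isCompact.isBounded.subset_ball 0
  obtain ⟨K, hK⟩ := hφc.exists_bound_of_continuous hφ.continuous
  obtain ⟨D, hD, hη⟩ := exists_eLpNorm_fderiv_logCutoff_le M
  have hmeas := aestronglyMeasurable_restrict_of_continuousOn_sdiff_axis3 hΩ.measurableSet
    hF.continuousOn
  set c : ℝ≥0∞ := ↑(3 * Fintype.card ι * K.toNNReal) * D
  have hc : c ≠ ⊤ := ENNReal.mul_ne_top ENNReal.coe_ne_top hD
  refine tendsto_nhds_unique (tendsto_setIntegral_logCutoff_mul hint)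
    (tendsto_zero_iff_enorm_tendsto_zero.2 ?_)
  refine tendsto_of_tendsto_of_tendsto_of_le_of_le' tendsto_const_nhds
    (by simpa using ENNReal.Tendsto.const_mul hE (.inr hc)) (Eventually.of_forall fun _ => zero_le)
    ?_
  filter_upwards [Ioc_mem_nhdsGT (show (0 : ℝ) < 1 / 4 by norm_num)] with ε hε
  calc ‖∫ x in Ω, logCutoff ε x * gradContract F φ x‖ₑ
      ≤ ∫⁻ x in Ω, ‖gradCommutator F (logCutoff ε) φ x‖ₑ :=
        enorm_setIntegral_logCutoff_mul_gradContract_le hΩ hF hdiv hφ hφc hφΩ hε.1 hε.2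
    _ ≤ ↑(3 * Fintype.card ι * K.toNNReal) * eLpNorm F 2 (volume.restrict (Ω \ axisTube ε)) *
          eLpNorm (fderiv ℝ (logCutoff ε)) 2 (volume.restrict (ball 0 M)) :=
        lintegral_enorm_gradCommutator_logCutoff_le hΩ.measurableSet hmeas hM
          (fun x => (hK x).trans (Real.le_coe_toNNReal K)) hε.1 hε.2
    _ ≤ ↑(3 * Fintype.card ι * K.toNNReal) * eLpNorm F 2 (volume.restrict (Ω \ axisTube ε)) *
          (D / ENNReal.ofReal √|Real.log ε|) := by
        gcongr
        exact hη ε hε.1 hε.2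
    _ = c * (eLpNorm F 2 (volume.restrict (Ω \ axisTube ε)) /
          ENNReal.ofReal √|Real.log ε|) := by
        simp only [c, div_eq_mul_inv]
        ring

end Capacity

section SublogEnergy

variable {Ω : Set V3} {E E' : Type*} [NormedAddCommGroup E] [NormedAddCommGroup E'] {f : V3 → E}

lemma tendsto_ofReal_sqrt_abs_log :
    Tendsto (fun ε => ENNReal.ofReal √|Real.log ε|) (𝓝[>] 0) (𝓝 ⊤) :=
  ENNReal.tendsto_ofReal_nhds_top.2 <| Real.tendsto_sqrt_atTop.comp <|
    tendsto_abs_atBot_atTop.comp Real.tendsto_log_nhdsGT_zero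

lemma sublogEnergy_of_eLpNorm_ne_top (hf : eLpNorm f 2 (volume.restrict Ω) ≠ ⊤) :
    SublogEnergy Ω f := by
  refine tendsto_of_tendsto_of_tendsto_of_le_of_le tendsto_const_nhds
    (by simpa using ENNReal.Tendsto.const_div tendsto_ofReal_sqrt_abs_log (.inr hf))
    (fun _ => zero_le) fun ε => ?_
  gcongr
  exact Set.sdiff_subset

lemma sublogEnergy_of_tendsto_toReal {s : ℝ → ℝ}
    (hfin : ∀ᶠ ε in 𝓝[>] (0 : ℝ), eLpNorm f 2 (volume.restrict (Ω \ axisTube ε)) ≠ ⊤)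
    (hle : ∀ ε, (eLpNorm f 2 (volume.restrict (Ω \ axisTube ε))).toReal ≤ s ε)
    (hs : Tendsto (fun ε => s ε / √|Real.log ε|) (𝓝[>] 0) (𝓝 0)) : SublogEnergy Ω f := by
  refine tendsto_of_tendsto_of_tendsto_of_le_of_le' tendsto_const_nhds
    (by simpa using ENNReal.tendsto_ofReal hs) (Eventually.of_forall fun _ => zero_le) ?_
  filter_upwards [hfin, Ioc_mem_nhdsGT (show (0 : ℝ) < 1 / 4 by norm_num)] with ε hεfin hε
  rw [ENNReal.ofReal_div_of_pos (Real.sqrt_pos.2 (one_pos.trans_le (one_le_abs_log hε.1 hε.2)))]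
  gcongr
  exact (ENNReal.le_ofReal_iff_toReal_le hεfin (ENNReal.toReal_nonneg.trans (hle ε))).2 (hle ε)

lemma SublogEnergy.mono {g : V3 → E'} (hg : SublogEnergy Ω g)
    (hfg : ∀ᵐ x ∂volume.restrict Ω, ‖f x‖ ≤ ‖g x‖) : SublogEnergy Ω f := by
  refine tendsto_of_tendsto_of_tendsto_of_le_of_le tendsto_const_nhds hg (fun _ => zero_le)
    fun ε => ?_
  gcongr ?_ / _
  exact eLpNorm_mono_ae (ae_restrict_of_ae_restrict_of_subset Set.sdiff_subset hfg)

lemma SublogEnergy.norm (hf : SublogEnergy Ω f) : SublogEnergy Ω fun x => ‖f x‖ := by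
  simpa only [SublogEnergy, eLpNorm_norm] using hf

lemma SublogEnergy.add {g : V3 → E} (hf : SublogEnergy Ω f) (hg : SublogEnergy Ω g)
    (hfm : AEStronglyMeasurable f (volume.restrict Ω))
    (hgm : AEStronglyMeasurable g (volume.restrict Ω)) : SublogEnergy Ω fun x => f x + g x := by
  refine tendsto_of_tendsto_of_tendsto_of_le_of_le tendsto_const_nhds
    (by simpa using Tendsto.add hf hg) (fun _ => zero_le) fun ε => ?_
  rw [← ENNReal.add_div]
  gcongr
  have hsub : volume.restrict (Ω \ axisTube ε) ≤ volume.restrict Ω :=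
    Measure.restrict_mono_set _ Set.sdiff_subset
  exact eLpNorm_add_le (hfm.mono_measure hsub) (hgm.mono_measure hsub) one_le_two

end SublogEnergy

section Stress

variable {Ω U : Set V3} {v : V3 → V3} {q : V3 → ℝ} {g : V3 → Fin 3 → Fin 3 → ℝ}

/-- The tensor `∇v + g - q I`, whose rows are divergence-free exactly when
`-Δv + ∇q = div g`. -/
def stress (v : V3 → V3) (q : V3 → ℝ) (g : V3 → Fin 3 → Fin 3 → ℝ) (x : V3) (i j : Fin 3) : ℝ :=
  pd j (fun z => v z i) x + g x i j - if i = j then q x else 0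

lemma contDiffOn_stress (hU : IsOpen U) (hv : ContDiffOn ℝ 2 v U) (hq : ContDiffOn ℝ 1 q U)
    (hg : ContDiffOn ℝ 1 g U) : ContDiffOn ℝ 1 (stress v q g) U := by
  refine contDiffOn_pi.2 fun i => contDiffOn_pi.2 fun j => ?_
  have hvi := contDiffOn_pd hU (m := 1) (by norm_num) (contDiffOn_euclidean.1 hv i) j
  refine (hvi.add (contDiffOn_pi.1 (contDiffOn_pi.1 hg i) j)).sub ?_
  split_ifs
  exacts [hq, contDiffOn_const]

lemma sum_pd_stress (hU : IsOpen U) (hv : ContDiffOn ℝ 2 v U) (hq : ContDiffOn ℝ 1 q U)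
    (hg : ContDiffOn ℝ 1 g U) {x : V3} (hx : x ∈ U) (i : Fin 3) :
    ∑ j, pd j (fun z => stress v q g z i j) x =
      lap3 (fun z => v z i) x + ∑ j, pd j (fun z => g z i j) x - pd i q x := by
  have hdiff {f : V3 → ℝ} (hf : ContDiffOn ℝ 1 f U) : DifferentiableAt ℝ f x :=
    (hf.contDiffAt (hU.mem_nhds hx)).differentiableAt one_ne_zero
  have hdv (j : Fin 3) := hdiff <|
    contDiffOn_pd hU (m := 1) (by norm_num) (contDiffOn_euclidean.1 hv i) j
  have hdg (j : Fin 3) := hdiff (contDiffOn_pi.1 (contDiffOn_pi.1 hg i) j)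
  have hterm (j : Fin 3) : pd j (fun z => stress v q g z i j) x =
      pd j (pd j fun z => v z i) x + pd j (fun z => g z i j) x - if i = j then pd j q x else 0 := by
    split_ifs with hij
    · simp only [stress, if_pos hij]
      rw [pd, fderiv_fun_sub ((hdv j).fun_add (hdg j)) (hdiff hq), fderiv_fun_add (hdv j) (hdg j)]
      rfl
    · simp only [stress, if_neg hij, sub_zero]
      rw [pd, fderiv_fun_add (hdv j) (hdg j)]
      rfl
  simp only [hterm, Finset.sum_sub_distrib, Finset.sum_add_distrib, Finset.sum_ite_eq,
    Finset.mem_univ, if_true]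
  rfl

lemma norm_stress_le {x : V3} (hv : DifferentiableAt ℝ v x) :
    ‖stress v q g x‖ ≤ ‖fderiv ℝ v x‖ + ‖q x‖ + ‖g x‖ := by
  refine (pi_norm_le_iff_of_nonneg (by positivity)).2 fun i =>
    (pi_norm_le_iff_of_nonneg (by positivity)).2 fun j => ?_
  have hgij : ‖g x i j‖ ≤ ‖g x‖ := (norm_le_pi_norm (g x i) j).trans (norm_le_pi_norm (g x) i)
  have hqij : ‖if i = j then q x else 0‖ ≤ ‖q x‖ := by split_ifs <;> simp
  refine (norm_sub_le_of_le (norm_add_le_of_le (abs_pd_coord_le hv i j) hgij) hqij).trans_eq ?_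
  ring

lemma gradContract_stress {φ : V3 → Fin 3 → ℝ} {x : V3}
    (hdiv : ∑ j, pd j (fun z => φ z j) x = 0) :
    gradContract (stress v q g) φ x =
      ∑ i, ∑ j, (pd j (fun z => v z i) x + g x i j) * pd j (fun z => φ z i) x := by
  simp only [gradContract, stress, sub_mul, ite_mul, zero_mul, Finset.sum_sub_distrib,
    Finset.sum_ite_eq, Finset.mem_univ, if_true, ← Finset.mul_sum, hdiv, mul_zero, sub_zero]

end Stress

section AcrossAxis

variable {Ω : Set V3} {v : V3 → V3} {q : V3 → ℝ} {g : V3 → Fin 3 → Fin 3 → ℝ}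

lemma aestronglyMeasurable_fderiv_restrict (hΩ : IsOpen Ω) {E : Type*} [NormedAddCommGroup E]
    [NormedSpace ℝ E] [SecondCountableTopology (V3 →L[ℝ] E)] {f : V3 → E}
    (hf : ContDiffOn ℝ 1 f (Ω \ axis3)) :
    AEStronglyMeasurable (fderiv ℝ f) (volume.restrict Ω) :=
  aestronglyMeasurable_restrict_of_continuousOn_sdiff_axis3 hΩ.measurableSet
    (hf.continuousOn_fderiv_of_isOpen (hΩ.sdiff isClosed_axis3) le_rfl)

lemma ae_restrict_differentiableAt (hΩ : IsOpen Ω) {E : Type*} [NormedAddCommGroup E]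
    [NormedSpace ℝ E] {f : V3 → E} (hf : ContDiffOn ℝ 1 f (Ω \ axis3)) :
    ∀ᵐ x ∂volume.restrict Ω, DifferentiableAt ℝ f x := by
  filter_upwards [ae_restrict_mem_sdiff_axis3 hΩ.measurableSet] with x hx
  exact (hf.differentiableOn one_ne_zero).differentiableAt
    ((hΩ.sdiff isClosed_axis3).mem_nhds hx)

lemma integrableOn_of_eLpNorm_one_ne_top {E : Type*} [NormedAddCommGroup E] {f : V3 → E}
    (hf : AEStronglyMeasurable f (volume.restrict Ω))
    (hf1 : eLpNorm f 1 (volume.restrict Ω) ≠ ⊤) : IntegrableOn f Ω :=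
  memLp_one_iff_integrable.1 ⟨hf, hf1.lt_top⟩

lemma sublogEnergy_stress (hΩ : IsOpen Ω) (hv : ContDiffOn ℝ 1 v (Ω \ axis3))
    (hq : ContinuousOn q (Ω \ axis3)) (hg : ContinuousOn g (Ω \ axis3))
    (hdvE : SublogEnergy Ω (fderiv ℝ v)) (hqE : SublogEnergy Ω q) (hgE : SublogEnergy Ω g) :
    SublogEnergy Ω (stress v q g) := by
  have hdvm := (aestronglyMeasurable_fderiv_restrict hΩ hv).norm
  have hqm := (aestronglyMeasurable_restrict_of_continuousOn_sdiff_axis3 hΩ.measurableSet hq).norm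
  have hgm := (aestronglyMeasurable_restrict_of_continuousOn_sdiff_axis3 hΩ.measurableSet hg).norm
  refine ((hdvE.norm.add hqE.norm hdvm hqm).add hgE.norm (hdvm.add hqm) hgm).mono ?_
  filter_upwards [ae_restrict_differentiableAt hΩ hv] with x hx
  exact (norm_stress_le hx).trans (le_abs_self _)

lemma integrableOn_sum_mul_pd (hΩ : IsOpen Ω) (hv : ContDiffOn ℝ 1 v (Ω \ axis3))
    (hdv1 : IntegrableOn (fderiv ℝ v) Ω) (hg1 : IntegrableOn g Ω) {φ : V3 → V3}
    (hφ : ContDiff ℝ 1 φ) (hφc : HasCompactSupport φ) :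
    IntegrableOn (fun x => ∑ i, ∑ j, (pd j (fun z => v z i) x + g x i j) *
      pd j (fun z => φ z i) x) Ω := by
  refine integrable_finsetSum _ fun i _ => integrable_finsetSum _ fun j _ => ?_
  have hdvij : IntegrableOn (pd j fun z => v z i) Ω := by
    refine hdv1.norm.mono' ?_ ?_
    · exact aestronglyMeasurable_restrict_of_continuousOn_sdiff_axis3 hΩ.measurableSet
        (continuousOn_pd (hΩ.sdiff isClosed_axis3) (contDiffOn_euclidean.1 hv i) j)
    · filter_upwards [ae_restrict_differentiableAt hΩ hv] with x hx using abs_pd_coord_le hx i j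
  obtain ⟨C, hC⟩ := (hφc.fderiv (𝕜 := ℝ)).exists_bound_of_continuous
    (hφ.continuous_fderiv one_ne_zero)
  refine (hdvij.add ((hg1.eval i).eval j)).mul_bdd (c := C)
    (continuous_pd (contDiff_euclidean.1 hφ i) j).aestronglyMeasurable
    (Eventually.of_forall fun x => ?_)
  exact (abs_pd_coord_le (hφ.differentiable one_ne_zero x) i j).trans (hC x)

theorem setIntegral_momentum_eq_zero (hΩ : IsOpen Ω) (hv : ContDiffOn ℝ 2 v (Ω \ axis3))
    (hq : ContDiffOn ℝ 1 q (Ω \ axis3)) (hg : ContDiffOn ℝ 1 g (Ω \ axis3))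
    (heq : ∀ x ∈ Ω \ axis3, ∀ i,
      -lap3 (fun z => v z i) x + pd i q x = ∑ j, pd j (fun z => g z i j) x)
    (hdv1 : eLpNorm (fderiv ℝ v) 1 (volume.restrict Ω) ≠ ⊤)
    (hg1 : eLpNorm g 1 (volume.restrict Ω) ≠ ⊤)
    (hdvE : SublogEnergy Ω (fderiv ℝ v)) (hqE : SublogEnergy Ω q) (hgE : SublogEnergy Ω g)
    {φ : V3 → V3} (hφ : ContDiff ℝ 1 φ) (hφc : HasCompactSupport φ) (hφΩ : tsupport φ ⊆ Ω)
    (hdiv : ∀ x, ∑ j, pd j (fun z => φ z j) x = 0) :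
    ∫ x in Ω, ∑ i, ∑ j, (pd j (fun z => v z i) x + g x i j) * pd j (fun z => φ z i) x = 0 := by
  have hU : IsOpen (Ω \ axis3) := hΩ.sdiff isClosed_axis3
  have hv1 : ContDiffOn ℝ 1 v (Ω \ axis3) := hv.of_le one_le_two
  have hdv_int := integrableOn_of_eLpNorm_one_ne_top
    (aestronglyMeasurable_fderiv_restrict hΩ hv1) hdv1
  have hg_int := integrableOn_of_eLpNorm_one_ne_top
    (aestronglyMeasurable_restrict_of_continuousOn_sdiff_axis3 hΩ.measurableSet hg.continuousOn) hg1
  have hint := integrableOn_sum_mul_pd hΩ hv1 hdv_int hg_int hφ hφc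
  have hpressure (x : V3) := gradContract_stress (v := v) (q := q) (g := g)
    (φ := fun z i => φ z i) (hdiv x)
  simp only [← hpressure] at hint ⊢
  have hoflp : tsupport (fun z i => φ z i) ⊆ tsupport φ :=
    closure_mono fun x hx hφ0 => hx (by ext; simp [hφ0])
  refine (sublogEnergy_stress hΩ hv1 hq.continuousOn hg.continuousOn hdvE hqE
    hgE).setIntegral_gradContract_eq_zero hΩ (contDiffOn_stress hU hv hq hg) (fun x hx i => ?_)
    (contDiff_pi.2 (contDiff_euclidean.1 hφ)) (hφc.of_isClosed_subset (isClosed_tsupport _) hoflp)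
    (hoflp.trans hφΩ) hint
  rw [sum_pd_stress hU hv hq hg hx]
  linarith [heq x hx i]

theorem setIntegral_sum_mul_pd_eq_zero (hΩ : IsOpen Ω) (hv : ContDiffOn ℝ 1 v (Ω \ axis3))
    (hdiv : ∀ x ∈ Ω \ axis3, ∑ j, pd j (fun z => v z j) x = 0)
    (hv2 : eLpNorm v 2 (volume.restrict Ω) ≠ ⊤) {ψ : V3 → ℝ} (hψ : ContDiff ℝ 1 ψ)
    (hψc : HasCompactSupport ψ) (hψΩ : tsupport ψ ⊆ Ω) :
    ∫ x in Ω, ∑ j, v x j * pd j ψ x = 0 := by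
  let F : V3 → Unit → Fin 3 → ℝ := fun x _ j => v x j
  have hψ' : tsupport (fun z (_ : Unit) => ψ z) ⊆ tsupport ψ :=
    closure_mono fun x hx hψ0 => hx (by ext; simpa using hψ0)
  have hFE : SublogEnergy Ω F := (sublogEnergy_of_eLpNorm_ne_top hv2).mono <|
    Eventually.of_forall fun x => (pi_norm_le_iff_of_nonneg (norm_nonneg _)).2 fun _ =>
      (pi_norm_le_iff_of_nonneg (norm_nonneg _)).2 fun j => PiLp.norm_apply_le (p := 2) (v x) j
  have hF (x : V3) : gradContract F (fun z _ => ψ z) x = ∑ j, v x j * pd j ψ x := by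
    simp [gradContract, F]
  have hvL : MemLp v 2 (volume.restrict Ω) :=
    ⟨aestronglyMeasurable_restrict_of_continuousOn_sdiff_axis3 hΩ.measurableSet hv.continuousOn,
      hv2.lt_top⟩
  have hint : IntegrableOn (fun x => ∑ j, v x j * pd j ψ x) Ω :=
    integrable_finsetSum _ fun j _ => (hvL.eval_piLp j).integrable_mul (q := 2) <|
      (continuous_pd hψ j).memLp_of_hasCompactSupport <|
        hψc.of_isClosed_subset (isClosed_tsupport _) (tsupport_pd_subset j ψ)
  simp only [← hF] at hint ⊢
  exact hFE.setIntegral_gradContract_eq_zero hΩ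
    (contDiffOn_pi.2 fun _ => contDiffOn_pi.2 fun j => contDiffOn_euclidean.1 hv j)
    (fun x hx _ => hdiv x hx) (contDiff_pi.2 fun _ => hψ)
    (hψc.of_isClosed_subset (isClosed_tsupport _) hψ') (hψ'.trans hψΩ) hint

theorem weak_formulation_across_axis_general (hΩ : IsOpen Ω)
    (hg : ContDiffOn ℝ 1 g (Ω \ axis3)) (hv : ContDiffOn ℝ 2 v (Ω \ axis3))
    (hq : ContDiffOn ℝ 1 q (Ω \ axis3))
    (heq : ∀ x ∈ Ω \ axis3,
      (∀ i, -lap3 (fun z => v z i) x + pd i q x = ∑ j, pd j (fun z => g z i j) x) ∧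
      ∑ j, pd j (fun z => v z j) x = 0)
    (hv2 : eLpNorm v 2 (volume.restrict Ω) ≠ ⊤)
    (hdv1 : eLpNorm (fderiv ℝ v) 1 (volume.restrict Ω) ≠ ⊤)
    (hg1 : eLpNorm g 1 (volume.restrict Ω) ≠ ⊤)
    (hfin : ∀ᶠ ε in 𝓝[>] (0 : ℝ),
      eLpNorm (fderiv ℝ v) 2 (volume.restrict (Ω \ axisTube ε)) ≠ ⊤ ∧
      eLpNorm q 2 (volume.restrict (Ω \ axisTube ε)) ≠ ⊤ ∧
      eLpNorm g 2 (volume.restrict (Ω \ axisTube ε)) ≠ ⊤)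
    (hsmall : Tendsto (fun ε =>
      ((eLpNorm (fderiv ℝ v) 2 (volume.restrict (Ω \ axisTube ε))).toReal
        + (eLpNorm q 2 (volume.restrict (Ω \ axisTube ε))).toReal
        + (eLpNorm g 2 (volume.restrict (Ω \ axisTube ε))).toReal)
        / √|Real.log ε|) (𝓝[>] 0) (𝓝 0)) :
    (∀ φ : V3 → V3, ContDiff ℝ 1 φ → HasCompactSupport φ → tsupport φ ⊆ Ω →
      (∀ x, ∑ j, pd j (fun z => φ z j) x = 0) →
      ∫ x in Ω, ∑ i, ∑ j, (pd j (fun z => v z i) x + g x i j) * pd j (fun z => φ z i) x = 0) ∧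
    (∀ ψ : V3 → ℝ, ContDiff ℝ 1 ψ → HasCompactSupport ψ → tsupport ψ ⊆ Ω →
      ∫ x in Ω, ∑ j, v x j * pd j ψ x = 0) := by
  have hdvE : SublogEnergy Ω (fderiv ℝ v) :=
    sublogEnergy_of_tendsto_toReal (hfin.mono fun _ h => h.1)
      (fun _ => by rw [add_assoc]; exact le_add_of_nonneg_right (by positivity)) hsmall
  have hqE : SublogEnergy Ω q :=
    sublogEnergy_of_tendsto_toReal (hfin.mono fun _ h => h.2.1)
      (fun _ => by rw [add_right_comm]; exact le_add_of_nonneg_left (by positivity)) hsmall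
  have hgE : SublogEnergy Ω g :=
    sublogEnergy_of_tendsto_toReal (hfin.mono fun _ h => h.2.2)
      (fun _ => le_add_of_nonneg_left (by positivity)) hsmall
  exact ⟨fun φ hφ hφc hφΩ hφdiv => setIntegral_momentum_eq_zero hΩ hv hq hg
      (fun x hx => (heq x hx).1) hdv1 hg1 hdvE hqE hgE hφ hφc hφΩ hφdiv,
    fun ψ hψ hψc hψΩ => setIntegral_sum_mul_pd_eq_zero hΩ (hv.of_le one_le_two)
      (fun x hx => (heq x hx).2) hv2 hψ hψc hψΩ⟩

end AcrossAxis

/-- the singular axis does not contribute to the weak formulation (Lemma 2.4). -/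
theorem weak_formulation_across_axis (R a b : ℝ) (hR : 0 < R) (hab : a < b) (hab' : 0 < a * b)
    (g : V3 → Fin 3 → Fin 3 → ℝ) (v : V3 → V3) (q : V3 → ℝ)
    (hreg_g : ContDiffOn ℝ (⊤:ℕ∞) g (OmegaR a b R \ axis3))
    (hreg_v : ContDiffOn ℝ (⊤:ℕ∞) v (OmegaR a b R \ axis3))
    (hreg_q : ContDiffOn ℝ (⊤:ℕ∞) q (OmegaR a b R \ axis3))
    (heq : ∀ x ∈ OmegaR a b R \ axis3,
      (∀ i, - lap3 (fun z => v z i) x + pd i q x = ∑ j, pd j (fun z => g z i j) x) ∧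
      (∑ j, pd j (fun z => v z j) x) = 0)
    (hv2 : eLpNorm v 2 (volume.restrict (OmegaR a b R)) ≠ ⊤)
    (hdv1 : eLpNorm (fun x => fderiv ℝ v x) 1 (volume.restrict (OmegaR a b R)) ≠ ⊤)
    (hg1 : eLpNorm g 1 (volume.restrict (OmegaR a b R)) ≠ ⊤)
    (hfin : ∀ᶠ ε in 𝓝[>] (0:ℝ),
      eLpNorm (fun x => fderiv ℝ v x) 2 (volume.restrict (OmegaR a b R \ OmegaR a b ε)) ≠ ⊤ ∧
      eLpNorm q 2 (volume.restrict (OmegaR a b R \ OmegaR a b ε)) ≠ ⊤ ∧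
      eLpNorm g 2 (volume.restrict (OmegaR a b R \ OmegaR a b ε)) ≠ ⊤)
    (hsmall : Tendsto (fun ε =>
      ((eLpNorm (fun x => fderiv ℝ v x) 2
          (volume.restrict (OmegaR a b R \ OmegaR a b ε))).toReal
        + (eLpNorm q 2 (volume.restrict (OmegaR a b R \ OmegaR a b ε))).toReal
        + (eLpNorm g 2 (volume.restrict (OmegaR a b R \ OmegaR a b ε))).toReal)
        / Real.sqrt |Real.log ε|) (𝓝[>] (0:ℝ)) (𝓝 0)) :
    (∀ φ : V3 → V3, ContDiff ℝ (⊤:ℕ∞) φ → HasCompactSupport φ →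
      tsupport φ ⊆ OmegaR a b R → (∀ x, ∑ j, pd j (fun z => φ z j) x = 0) →
      ∫ x in OmegaR a b R,
        (∑ i, ∑ j, (pd j (fun z => v z i) x + g x i j) * pd j (fun z => φ z i) x) = 0) ∧
    (∀ ψ : V3 → ℝ, ContDiff ℝ (⊤:ℕ∞) ψ → HasCompactSupport ψ →
      tsupport ψ ⊆ OmegaR a b R →
      ∫ x in OmegaR a b R, (∑ j, v x j * pd j ψ x) = 0) := by
  simp only [OmegaR_sdiff_OmegaR] at hfin hsmall
  obtain ⟨hmomentum, hcontinuity⟩ := weak_formulation_across_axis_general (isOpen_OmegaR a b R)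
    (hreg_g.of_le ENat.LEInfty.out) (hreg_v.of_le ENat.LEInfty.out) (hreg_q.of_le ENat.LEInfty.out)
    heq hv2 hdv1 hg1 hfin hsmall
  exact ⟨fun φ hφ => hmomentum φ (hφ.of_le ENat.LEInfty.out),
    fun ψ hψ => hcontinuity ψ (hψ.of_le ENat.LEInfty.out)⟩
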